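/- arXiv:2409.19380 — 2 statements merged into one kernel-verified Lean document; each statement's English description precedes it below -/
import Mathlib

section
/- Let d be a positive integer and let M be a d×d real matrix with singular value decomposition M = U S Vᵀ, where U and V are d×d real orthogonal matrices and S = diag{σ₁,…,σ_d} with σ₁ ≥ σ₂ ≥ ⋯ ≥ σ_d ≥ 0. Then for every d×d rotation matrix R, tr(R Mᵀ) ≤ σ₁ + ⋯ + σ_d. -/
/-!
Cyclicity of the trace gives `tr(R Mᵀ) = tr(W S) = ∑ j, W j j * σ j` with `W = Uᵀ R V`.
The matrix `W` is orthogonal, so its diagonal entries are at most `1`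
(`diag_le_one_of_transpose_mul_self`), and the bound follows from `σ j ≥ 0`.
-/

open Matrix

/-- The columns of an orthogonal matrix are unit vectors, so no diagonal entry exceeds `1`. -/
lemma diag_le_one_of_transpose_mul_self {d : ℕ} (W : Matrix (Fin d) (Fin d) ℝ)
    (hW : Wᵀ * W = 1) (j : Fin d) : W j j ≤ 1 := by
  have h : ∑ i, W i j * W i j = 1 := by
    simpa [Matrix.mul_apply] using congrFun (congrFun hW j) j
  have hj : W j j * W j j ≤ ∑ i, W i j * W i j :=
    Finset.single_le_sum (f := fun i => W i j * W i j)
      (fun i _ => mul_self_nonneg _) (Finset.mem_univ j)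
  nlinarith

/-- If `M = U S Vᵀ` is a singular value decomposition of `M` (`U`, `V`
orthogonal, `S = diag{σ₁,…,σ_d}` with `σ₁ ≥ ⋯ ≥ σ_d ≥ 0`), then for every `d×d`
rotation matrix `R`, `tr(R Mᵀ) ≤ σ₁ + ⋯ + σ_d`. -/
theorem trace_rot_mul_transpose_le_sum_singular_values (d : ℕ) (hd : 0 < d)
    (M U V : Matrix (Fin d) (Fin d) ℝ) (σ : Fin d → ℝ)
    (hσ0 : ∀ j, 0 ≤ σ j) (hσmono : ∀ i j : Fin d, i ≤ j → σ j ≤ σ i)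
    (hU : Uᵀ * U = 1) (hV : Vᵀ * V = 1)
    (hM : M = U * Matrix.diagonal σ * Vᵀ)
    (R : Matrix (Fin d) (Fin d) ℝ) (hR : Rᵀ * R = 1) (hRdet : R.det = 1) :
    (R * Mᵀ).trace ≤ ∑ j, σ j := by
  have hU' : U * Uᵀ = 1 := mul_eq_one_comm.mp hU
  have hW : (Uᵀ * R * V)ᵀ * (Uᵀ * R * V) = 1 := by
    calc (Uᵀ * R * V)ᵀ * (Uᵀ * R * V) = Vᵀ * (Rᵀ * (U * Uᵀ) * R) * V := by
          simp only [Matrix.transpose_mul, Matrix.transpose_transpose, Matrix.mul_assoc]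
      _ = 1 := by rw [hU', Matrix.mul_one, hR, Matrix.mul_one, hV]
  have htr : (R * Mᵀ).trace = ∑ j, (Uᵀ * R * V) j j * σ j := by
    have hcyc : (R * Mᵀ).trace = (Uᵀ * R * V * Matrix.diagonal σ).trace := by
      rw [hM, Matrix.transpose_mul, Matrix.transpose_mul, Matrix.transpose_transpose,
        Matrix.diagonal_transpose, ← Matrix.mul_assoc, ← Matrix.mul_assoc,
        Matrix.trace_mul_comm _ Uᵀ]
      simp only [Matrix.mul_assoc]
    rw [hcyc]
    simp only [Matrix.trace, Matrix.diag_apply, Matrix.mul_diagonal]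
  rw [htr]
  exact Finset.sum_le_sum fun j _ =>
    mul_le_of_le_one_left (hσ0 j) (diag_le_one_of_transpose_mul_self _ hW j)
end

section
/- Let d be a positive integer and let M be a d×d real matrix with singular value decomposition M = U S Vᵀ, where U and V are d×d real orthogonal matrices and S = diag{σ₁,…,σ_d} with σ₁ ≥ σ₂ ≥ ⋯ ≥ σ_d ≥ 0. If det(U Vᵀ) > 0, then R = U Vᵀ is a rotation matrix satisfying tr(R Mᵀ) = σ₁ + ⋯ + σ_d, and R = U Vᵀ maximizes tr(R Mᵀ) over all d×d rotation matrices R. -/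
/-!
By cyclicity of the trace, `tr(R Mᵀ) = ∑ j, W j j * σ j` with `W = Uᵀ R V`
(`trace_mul_svd_transpose`). For orthogonal `R` the matrix `W` is orthogonal, so its diagonal entries
are at most `1` and, as `σ ≥ 0`, the trace is at most `∑ j, σ j`. For `R = U Vᵀ` one has `W = 1`,
so the bound is attained; and `U Vᵀ` is orthogonal with positive determinant, hence a rotation.
-/

open Matrix

theorem trace_mul_svd_transpose {d : ℕ} (U V R : Matrix (Fin d) (Fin d) ℝ) (σ : Fin d → ℝ) :
    (R * (U * Matrix.diagonal σ * Vᵀ)ᵀ).trace = ∑ j, (Uᵀ * R * V) j j * σ j := by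
  have h : (R * (U * Matrix.diagonal σ * Vᵀ)ᵀ).trace
      = ((Uᵀ * R * V) * Matrix.diagonal σ).trace := by
    rw [Matrix.transpose_mul, Matrix.transpose_mul, Matrix.transpose_transpose,
      Matrix.diagonal_transpose, ← Matrix.mul_assoc, ← Matrix.mul_assoc, Matrix.trace_mul_comm]
    simp only [Matrix.mul_assoc]
  rw [h]
  simp [Matrix.trace, Matrix.mul_diagonal]

theorem orthogonal_apply_le_one {d : ℕ} {W : Matrix (Fin d) (Fin d) ℝ} (hW : Wᵀ * W = 1)
    (i j : Fin d) : W i j ≤ 1 := by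
  -- The squares of the entries in column `j` sum to `1`.
  have hcol : ∑ k, W k j * W k j = 1 := by
    simpa [Matrix.mul_apply] using congrFun (congrFun hW j) j
  have hle : W i j * W i j ≤ ∑ k, W k j * W k j :=
    Finset.single_le_sum (f := fun k => W k j * W k j)
      (fun k _ => mul_self_nonneg _) (Finset.mem_univ i)
  nlinarith

theorem orthogonal_mul {d : ℕ} {A B : Matrix (Fin d) (Fin d) ℝ} (hA : Aᵀ * A = 1)
    (hB : Bᵀ * B = 1) : (A * B)ᵀ * (A * B) = 1 := by
  rw [Matrix.transpose_mul, Matrix.mul_assoc, ← Matrix.mul_assoc Aᵀ, hA, Matrix.one_mul, hB]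

/-- If `M = U S Vᵀ` is a singular value decomposition of `M` (`U`, `V`
orthogonal, `S = diag{σ₁,…,σ_d}` with `σ₁ ≥ ⋯ ≥ σ_d ≥ 0`), and `det(U Vᵀ) > 0`, then
`R = U Vᵀ` is a rotation matrix with `tr(R Mᵀ) = σ₁ + ⋯ + σ_d`, and it maximizes
`tr(R Mᵀ)` over all `d×d` rotation matrices `R`. -/
theorem kabsch_umeyama_det_pos (d : ℕ) (hd : 0 < d)
    (M U V : Matrix (Fin d) (Fin d) ℝ) (σ : Fin d → ℝ)
    (hσ0 : ∀ j, 0 ≤ σ j) (hσmono : ∀ i j : Fin d, i ≤ j → σ j ≤ σ i)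
    (hU : Uᵀ * U = 1) (hV : Vᵀ * V = 1)
    (hM : M = U * Matrix.diagonal σ * Vᵀ)
    (hdet : 0 < (U * Vᵀ).det) :
    ((U * Vᵀ)ᵀ * (U * Vᵀ) = 1 ∧ (U * Vᵀ).det = 1) ∧
      ((U * Vᵀ) * Mᵀ).trace = ∑ j, σ j ∧
      ∀ R : Matrix (Fin d) (Fin d) ℝ, Rᵀ * R = 1 → R.det = 1 →
        (R * Mᵀ).trace ≤ ((U * Vᵀ) * Mᵀ).trace := by
  have hUt : Uᵀᵀ * Uᵀ = 1 := by
    rw [Matrix.transpose_transpose]; exact mul_eq_one_comm.1 hU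
  have hVt : Vᵀᵀ * Vᵀ = 1 := by
    rw [Matrix.transpose_transpose]; exact mul_eq_one_comm.1 hV
  have hO := orthogonal_mul hU hVt
  have hval : ((U * Vᵀ) * Mᵀ).trace = ∑ j, σ j := by
    have hW : Uᵀ * (U * Vᵀ) * V = 1 := by
      rw [← Matrix.mul_assoc, hU, Matrix.one_mul, hV]
    rw [hM, trace_mul_svd_transpose, hW]
    simp
  refine ⟨⟨hO, ?_⟩, hval, fun R hR _ => ?_⟩
  · have h := congrArg Matrix.det hO
    rw [Matrix.det_mul, Matrix.det_transpose, Matrix.det_one] at h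
    nlinarith
  · rw [hval, hM, trace_mul_svd_transpose]
    refine Finset.sum_le_sum fun j _ => mul_le_of_le_one_left (hσ0 j) ?_
    exact orthogonal_apply_le_one (orthogonal_mul (orthogonal_mul hUt hR) hV) j j
end
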